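/- Let L : ℝⁿ →L[ℝ] ℝⁿ be a continuous linear map, B a continuous bilinear map, T a continuous trilinear map, b ∈ ℝⁿ, f(x) = L x + B(x,x) + T(x,x,x) + b, and f̃(x) = L x + 2 • B(x,x) + 3 • T(x,x,x). Let x_{k-1}, x_k ∈ ℝⁿ, p = x_k − x_{k-1}, and suppose ⟪p, x_k⟫ ≠ 0. Suppose J_{k-1} is the exact Jacobian of f at x_{k-1}, i.e. J_{k-1} = D f(x_{k-1}), set y = f̃(x_k) − f̃(x_{k-1}), and define the updated operator J_k v = J_{k-1} v + (⟪p, v⟫ / ⟪p, x_k⟫) • (y − J_{k-1} p). Then J_k x_k = (D f(x_k))(x_k), i.e. the updated operator reproduces the action of the exact Jacobian at x_k on the vector x_k. -/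

import Mathlib

/-!
Euler's identity for homogeneous functions gives `D f(x) x = f̃(x)` for every `x`. The update sends
`x_k` to `J_{k-1} x_k + (y - J_{k-1} p) = y + J_{k-1} x_{k-1}`, and with `J_{k-1} = D f(x_{k-1})`
this is `f̃(x_k) - f̃(x_{k-1}) + f̃(x_{k-1}) = f̃(x_k)`.
-/

section

variable {𝕜 E F : Type*} [NontriviallyNormedField 𝕜] [NormedAddCommGroup E] [NormedSpace 𝕜 E]
  [NormedAddCommGroup F] [NormedSpace 𝕜 F]

-- Differentiate `t ↦ g (t • x)` at `t = 1` in two ways.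
theorem fderiv_apply_self_of_homogeneous {g : E → F} {x : E} {k : ℕ}
    (hg : DifferentiableAt 𝕜 g x) (hom : ∀ t : 𝕜, g (t • x) = t ^ k • g x) :
    fderiv 𝕜 g x x = k • g x := by
  have ray : HasDerivAt (fun t : 𝕜 ↦ t • x) x 1 := by
    simpa using (hasDerivAt_id (1 : 𝕜)).smul_const x
  have chain_rule : HasDerivAt (fun t : 𝕜 ↦ g (t • x)) (fderiv 𝕜 g x x) 1 :=
    hg.hasFDerivAt.comp_hasDerivAt_of_eq 1 ray (one_smul 𝕜 x).symm
  have power_rule : HasDerivAt (fun t : 𝕜 ↦ g (t • x)) (k • g x) 1 := by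
    simpa [hom, Nat.cast_smul_eq_nsmul] using (hasDerivAt_pow k (1 : 𝕜)).smul_const (g x)
  exact chain_rule.unique power_rule

theorem fderiv_bilinear_diag_apply_self (B : E →L[𝕜] E →L[𝕜] F) (x : E) :
    fderiv 𝕜 (fun z ↦ B z z) x x = 2 • B x x :=
  fderiv_apply_self_of_homogeneous (by fun_prop) fun t ↦ by simp [smul_smul, pow_succ']

theorem fderiv_trilinear_diag_apply_self (T : E →L[𝕜] E →L[𝕜] E →L[𝕜] F) (x : E) :
    fderiv 𝕜 (fun z ↦ T z z z) x x = 3 • T x x x :=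
  fderiv_apply_self_of_homogeneous (by fun_prop) fun t ↦ by simp [smul_smul, pow_succ']

theorem fderiv_cubic_apply_self (L : E →L[𝕜] F) (B : E →L[𝕜] E →L[𝕜] F)
    (T : E →L[𝕜] E →L[𝕜] E →L[𝕜] F) (b : F) (x : E) :
    fderiv 𝕜 (fun z ↦ L z + B z z + T z z z + b) x x = L x + 2 • B x x + 3 • T x x x := by
  rw [fderiv_add_const, fderiv_fun_add (by fun_prop) (by fun_prop),
    fderiv_fun_add (by fun_prop) (by fun_prop), L.fderiv]
  simp only [add_apply, fderiv_bilinear_diag_apply_self, fderiv_trilinear_diag_apply_self]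

/-- The rank-one update `v ↦ J v + (φ v / φ x) • (y - J p)` of an approximate Jacobian `J`. The
update (10) of the paper is the case `φ = ⟪p, ·⟫`. The normalisation is at `x` rather than at `p`,
so that the correction is applied in full to `x`; it is meaningful only for `φ x ≠ 0`. -/
noncomputable def rankOneUpdate (J : E →L[𝕜] F) (φ : StrongDual 𝕜 E) (x p : E) (y : F) :
    E →L[𝕜] F :=
  J + ((φ x)⁻¹ • φ).smulRight (y - J p)

theorem rankOneUpdate_apply (J : E →L[𝕜] F) (φ : StrongDual 𝕜 E) (x p : E) (y : F) (v : E) :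
    rankOneUpdate J φ x p y v = J v + (φ v / φ x) • (y - J p) := by
  simp [rankOneUpdate, div_eq_inv_mul]

theorem rankOneUpdate_apply_self (J : E →L[𝕜] F) {φ : StrongDual 𝕜 E} {x : E} (hφ : φ x ≠ 0)
    (p : E) (y : F) : rankOneUpdate J φ x p y x = y + J (x - p) := by
  rw [rankOneUpdate_apply, div_self hφ, one_smul, map_sub]
  abel

theorem modified_bfgs_matches_exact_jacobian_general (L : E →L[𝕜] F) (B : E →L[𝕜] E →L[𝕜] F)
    (T : E →L[𝕜] E →L[𝕜] E →L[𝕜] F) (b : F) {f ftilde : E → F}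
    (hf : ∀ x, f x = L x + B x x + T x x x + b)
    (hft : ∀ x, ftilde x = L x + 2 • B x x + 3 • T x x x)
    (x₀ : E) {x : E} {φ : StrongDual 𝕜 E} (hφ : φ x ≠ 0) :
    rankOneUpdate (fderiv 𝕜 f x₀) φ x (x - x₀) (ftilde x - ftilde x₀) x = fderiv 𝕜 f x x := by
  have euler (z : E) : fderiv 𝕜 f z z = ftilde z := by
    rw [funext hf, fderiv_cubic_apply_self, hft]
  rw [rankOneUpdate_apply_self _ hφ, sub_sub_cancel, euler, euler, sub_add_cancel]

end

theorem modified_bfgs_matches_exact_jacobian (n : ℕ)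
    (L : EuclideanSpace ℝ (Fin n) →L[ℝ] EuclideanSpace ℝ (Fin n))
    (B : EuclideanSpace ℝ (Fin n) →L[ℝ] EuclideanSpace ℝ (Fin n) →L[ℝ] EuclideanSpace ℝ (Fin n))
    (T : EuclideanSpace ℝ (Fin n) →L[ℝ] EuclideanSpace ℝ (Fin n) →L[ℝ]
         EuclideanSpace ℝ (Fin n) →L[ℝ] EuclideanSpace ℝ (Fin n))
    (b : EuclideanSpace ℝ (Fin n))
    (f ftilde : EuclideanSpace ℝ (Fin n) → EuclideanSpace ℝ (Fin n))
    (hf : ∀ x, f x = L x + B x x + T x x x + b)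
    (hft : ∀ x, ftilde x = L x + 2 • B x x + 3 • T x x x)
    (xk1 xk : EuclideanSpace ℝ (Fin n))
    (p : EuclideanSpace ℝ (Fin n)) (hp : p = xk - xk1)
    (hpx : inner ℝ p xk ≠ (0 : ℝ))
    (Jk1 : EuclideanSpace ℝ (Fin n) →L[ℝ] EuclideanSpace ℝ (Fin n))
    (hJk1 : Jk1 = fderiv ℝ f xk1)
    (y : EuclideanSpace ℝ (Fin n)) (hy : y = ftilde xk - ftilde xk1)
    (Jk : EuclideanSpace ℝ (Fin n) → EuclideanSpace ℝ (Fin n))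
    (hJk : ∀ v, Jk v = Jk1 v + ((inner ℝ p v : ℝ) / (inner ℝ p xk : ℝ)) • (y - Jk1 p)) :
    Jk xk = (fderiv ℝ f xk) xk := by
  subst hp hJk1 hy
  rw [hJk, ← modified_bfgs_matches_exact_jacobian_general L B T b hf hft xk1
    (φ := innerSL ℝ (xk - xk1)) hpx, rankOneUpdate_apply]
  simp only [innerSL_apply_apply]
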